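/- Let (Z,z) be a pointed metric space, let X̃ ⊆ X and Y be subsets of Z with X̃ ⊆ X, z ∈ X̃ ∩ Y, and X̃ closed. Let ε, r > 0. If D^{z,r/4}[X,Y] > ε and D^{z,r}[X̃,Y] < ε/8, then ex(X ∩ B(z, r/2), X̃) ≥ (ε/8)·r. -/

import Mathlib

/-!
Suppose `ex(X ∩ B(z,r/2), X̃) < εr/8`; it suffices to bound both excesses in `D^{z,r/4}[X,Y]`
by `εr/4`.

* Points of `Y ∩ B(z,r/4)` lie within `εr/8` of `X̃ ⊆ X`.
* Let `x ∈ X ∩ B(z,r/4)`. If `ε ≥ 1`, then `z ∈ Y` is already at distance at most `r/4 ≤ εr/4`.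
  If `ε < 1`, some `t ∈ X̃` is within `εr/8 < r/8` of `x`, so `t ∈ B(z,r)`, and some `y ∈ Y` is
  within `εr/8` of `t`; the triangle inequality gives `d(x,y) ≤ εr/4`.
-/

open Metric Set Filter
open scoped ENNReal NNReal

/-- The excess of `A` over `B`: `ex(A,B) = sup_{a ∈ A} inf_{b ∈ B} d(a,b)`,
with the convention `ex(∅,B) = 0`. -/
noncomputable def exc {X : Type*} [PseudoEMetricSpace X] (A B : Set X) : ℝ≥0∞ :=
  ⨆ a ∈ A, ⨅ b ∈ B, edist a b

/-- The relative Walkup-Wets distance in the closed ball `B(x,r)`: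
`D^{x,r}[A,B] = r⁻¹ · max(ex(A ∩ B(x,r), B), ex(B ∩ B(x,r), A))`. -/
noncomputable def WW {X : Type*} [PseudoMetricSpace X] (x : X) (r : ℝ) (A B : Set X) : ℝ≥0∞ :=
  (ENNReal.ofReal r)⁻¹ *
    max (exc (A ∩ Metric.closedBall x r) B) (exc (B ∩ Metric.closedBall x r) A)

lemma exists_edist_lt_of_exc_lt {X : Type*} [PseudoEMetricSpace X] {A B : Set X} {c : ℝ≥0∞}
    (h : exc A B < c) {a : X} (ha : a ∈ A) : ∃ b ∈ B, edist a b < c := by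
  have h' : (⨅ b ∈ B, edist a b) < c :=
    lt_of_le_of_lt (le_iSup₂ (f := fun a (_ : a ∈ A) => ⨅ b ∈ B, edist a b) a ha) h
  simpa only [iInf_lt_iff, exists_prop] using h'

lemma exc_le_of_forall_exists {X : Type*} [PseudoEMetricSpace X] {A B : Set X} {c : ℝ≥0∞}
    (h : ∀ a ∈ A, ∃ b ∈ B, edist a b ≤ c) : exc A B ≤ c := by
  refine iSup₂_le fun a ha => ?_
  obtain ⟨b, hb, hab⟩ := h a ha
  exact iInf₂_le_of_le b hb hab

/-- Clearing the normalising factor `r⁻¹` in the upper bound `D^{x,r}[A,B] < δ`. -/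
lemma max_exc_lt_of_WW_lt {X : Type*} [PseudoMetricSpace X] {x : X} {r δ : ℝ} {A B : Set X}
    (hr : 0 < r) (h : WW x r A B < ENNReal.ofReal δ) :
    max (exc (A ∩ Metric.closedBall x r) B) (exc (B ∩ Metric.closedBall x r) A)
      < ENNReal.ofReal (δ * r) := by
  rw [WW, mul_comm, ← div_eq_mul_inv, ENNReal.div_lt_iff (.inl (by simpa using hr))
    (.inl ENNReal.ofReal_ne_top), ← ENNReal.ofReal_mul' hr.le] at h
  exact h

/-- Clearing the normalising factor `r⁻¹` in the lower bound `δ < D^{x,r}[A,B]`. -/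
lemma lt_max_exc_of_lt_WW {X : Type*} [PseudoMetricSpace X] {x : X} {r δ : ℝ} {A B : Set X}
    (hr : 0 < r) (h : ENNReal.ofReal δ < WW x r A B) :
    ENNReal.ofReal (δ * r) <
      max (exc (A ∩ Metric.closedBall x r) B) (exc (B ∩ Metric.closedBall x r) A) := by
  rw [WW, mul_comm, ← div_eq_mul_inv, ENNReal.lt_div_iff_mul_lt (.inl (by simpa using hr))
    (.inl ENNReal.ofReal_ne_top), ← ENNReal.ofReal_mul' hr.le] at h
  exact h

/-- Excess lower bound: if `X̃ ⊆ X`, `z ∈ X̃ ∩ Y`, `X̃` is closed,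
`D^{z,r/4}[X,Y] > ε` and `D^{z,r}[X̃,Y] < ε/8`, then
`ex(X ∩ B(z,r/2), X̃) ≥ (ε/8)·r`. -/
theorem stmt2 {Z : Type*} [MetricSpace Z] (z : Z) (Xs Xt Y : Set Z)
    (hsub : Xt ⊆ Xs) (hz : z ∈ Xt ∩ Y) (hXt : IsClosed Xt)
    (ε r : ℝ) (hε : 0 < ε) (hr : 0 < r)
    (h1 : ENNReal.ofReal ε < WW z (r / 4) Xs Y)
    (h2 : WW z r Xt Y < ENNReal.ofReal (ε / 8)) :
    ENNReal.ofReal (ε / 8 * r) ≤ exc (Xs ∩ Metric.closedBall z (r / 2)) Xt := by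
  obtain ⟨hXtY, hYXt⟩ := max_lt_iff.1 (max_exc_lt_of_WW_lt hr h2)
  by_contra! hlt
  refine (lt_max_exc_of_lt_WW (by positivity) h1).not_ge (max_le ?_ ?_)
  · refine exc_le_of_forall_exists fun x hx => ?_
    have hxz : dist x z ≤ r / 4 := hx.2
    rcases le_or_gt 1 ε with hε1 | hε1
    · refine ⟨z, hz.2, ?_⟩
      rw [edist_dist]
      exact ENNReal.ofReal_le_ofReal (by nlinarith)
    · have hx2 : x ∈ Xs ∩ Metric.closedBall z (r / 2) :=
        ⟨hx.1, Metric.mem_closedBall.2 (by linarith)⟩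
      obtain ⟨t, ht, hxt⟩ := exists_edist_lt_of_exc_lt hlt hx2
      have hxt' : dist x t < ε / 8 * r := by
        rwa [edist_dist, ENNReal.ofReal_lt_ofReal_iff (by positivity)] at hxt
      have htz : dist t z ≤ r := by
        have := dist_triangle_left t z x
        nlinarith
      obtain ⟨y, hy, hty⟩ := exists_edist_lt_of_exc_lt hXtY ⟨ht, htz⟩
      have hty' : dist t y < ε / 8 * r := by
        rwa [edist_dist, ENNReal.ofReal_lt_ofReal_iff (by positivity)] at hty
      refine ⟨y, hy, ?_⟩
      rw [edist_dist]
      exact ENNReal.ofReal_le_ofReal (by linarith [dist_triangle x t y])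
  · refine exc_le_of_forall_exists fun y hy => ?_
    have hy2 : y ∈ Y ∩ Metric.closedBall z r :=
      ⟨hy.1, Metric.closedBall_subset_closedBall (by linarith) hy.2⟩
    obtain ⟨t, ht, hyt⟩ := exists_edist_lt_of_exc_lt hYXt hy2
    exact ⟨t, hsub ht, hyt.le.trans (ENNReal.ofReal_le_ofReal (by nlinarith))⟩
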